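/- Let n → ∞ through even integers and let d = d(n) satisfy 4 ≤ d ≤ (log n)²; set k = ⌊d/4⌋ and β = log₂ n + 20·log₂ log n. Sample (M_1,…,M_d) = G''(n,d), for each i ∈ [k] let G_i = M_{4i-3} ∪ M_{4i-2} ∪ M_{4i-1}, and let r be a uniformly random vertex of [n], independent of the graph. Then with high probability, for every vertex u ≠ r there is at most one index i ∈ [k] such that the graph distance from u to r in G_i is at most β/3. -/

import Mathlib

/-- `M` is an ordered `d`-tuple of pairwise edge-disjoint perfect matchings of `K_n`
(each matching being viewed as a 1-regular simple graph on `[n]`). -/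
def IsPMTuple {n d : ℕ} (M : Fin d → SimpleGraph (Fin n)) : Prop :=
  (∀ i, ∀ v, Nat.card ((M i).neighborSet v) = 1) ∧
  ∀ i j, i ≠ j → Disjoint (M i) (M j)

open Classical in
/-- Probability that `G''(n,d)`, the uniformly random ordered `d`-tuple of pairwise
edge-disjoint perfect matchings of `K_n`, satisfies the property `A`. -/
noncomputable def tupleProb (n d : ℕ) (A : (Fin d → SimpleGraph (Fin n)) → Prop) : ℝ :=
  ((Finset.univ.filter (fun M : Fin d → SimpleGraph (Fin n) =>
      IsPMTuple M ∧ A M)).card : ℝ) /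
  ((Finset.univ.filter (fun M : Fin d → SimpleGraph (Fin n) => IsPMTuple M)).card : ℝ)

/-- The `i`-th group graph `G_i`: the union of the matchings in colours `4i-3, 4i-2,
4i-1` (1-indexed), i.e. (0-indexed) in colours `4i, 4i+1, 4i+2`. -/
noncomputable def groupGraph {n d : ℕ} (M : Fin d → SimpleGraph (Fin n)) (i : ℕ) :
    SimpleGraph (Fin n) :=
  ⨆ c : Fin d, ⨆ _ : c.val = 4 * i ∨ c.val = 4 * i + 1 ∨ c.val = 4 * i + 2, M c

open Classical in
/-- Probability of the event `A` for the pair consisting of the uniformly random tuple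
`G''(n,d)` together with an independent uniformly random root vertex `r ∈ [n]`. -/
noncomputable def rootProb (n d : ℕ)
    (A : (Fin d → SimpleGraph (Fin n)) → Fin n → Prop) : ℝ :=
  ((Finset.univ.filter (fun P : (Fin d → SimpleGraph (Fin n)) × Fin n =>
      IsPMTuple P.1 ∧ A P.1 P.2)).card : ℝ) /
  ((Finset.univ.filter (fun P : (Fin d → SimpleGraph (Fin n)) × Fin n =>
      IsPMTuple P.1)).card : ℝ)

/-!
If a vertex `u ≠ r` is within distance `L` of `r` in two different group graphs, then two walks
from `r` to `u`, both spelled by colour words without immediate repetition, use disjoint sets of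
colours, and the first of them is a path. For fixed words such a coincidence is rare: if `xy` is
the last edge of the first walk, of colour `c`, then `xy` and an edge `ab` of colour `c` may be
switched to `xa` and `yb` for all but `L + 2d` vertices `a`. The switching can be undone because
`y` is still the end of the second walk, which does not use the colour `c`. So each pair of words
collides with probability at most `1 / (n - L - 2d)`. There are at most `3 * 2 ^ L` words for each
group graph and fewer than `(d / 4) ^ 2` ordered pairs of group graphs, which bounds the failure
probability for radius `ρ` by `2 * d ^ 2 * 4 ^ ρ / n`; for the radius in question this is a power
of `log n` divided by `n ^ (1 / 3)`.
-/

open Finset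

variable {V C : Type*}

section PerfectMatching

/-- A graph which is a perfect matching on its whole vertex type. -/
def IsPerfectMatching (G : SimpleGraph V) : Prop := ∀ v, ∃ w, ∀ z, G.Adj v z ↔ z = w

/-- The vertex matched with `v` when `G` is a perfect matching; an arbitrary neighbour of `v`
in general, and an arbitrary vertex if `v` is isolated. -/
noncomputable def mate (G : SimpleGraph V) (v : V) : V := @Classical.epsilon V ⟨v⟩ (G.Adj v)

variable {G : SimpleGraph V}

lemma isPerfectMatching_iff_card_neighborSet :
    IsPerfectMatching G ↔ ∀ v, Nat.card (G.neighborSet v) = 1 := by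
  refine forall_congr' fun v => ?_
  rw [Nat.card_coe_set_eq, Set.ncard_eq_one]
  simp only [Set.ext_iff, SimpleGraph.mem_neighborSet, Set.mem_singleton_iff]

namespace IsPerfectMatching

lemma adj_iff (hG : IsPerfectMatching G) {v w : V} : G.Adj v w ↔ w = mate G v := by
  obtain ⟨z, hz⟩ := hG v
  have hmate : G.Adj v (mate G v) := Classical.epsilon_spec ⟨z, (hz z).2 rfl⟩
  rw [hz, (hz _).1 hmate]

lemma adj_mate (hG : IsPerfectMatching G) (v : V) : G.Adj v (mate G v) :=
  hG.adj_iff.2 rfl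

lemma mate_mate (hG : IsPerfectMatching G) (v : V) : mate G (mate G v) = v :=
  (hG.adj_iff.1 (hG.adj_mate v).symm).symm

lemma comap (hG : IsPerfectMatching G) (σ : Equiv.Perm V) : IsPerfectMatching (G.comap σ) :=
  fun v => ⟨σ.symm (mate G (σ v)), fun _ => by
    rw [SimpleGraph.comap_adj, hG.adj_iff, Equiv.eq_symm_apply]⟩

lemma mate_comap (hG : IsPerfectMatching G) (σ : Equiv.Perm V) (v : V) :
    mate (G.comap σ) v = σ.symm (mate G (σ v)) := by
  refine ((hG.comap σ).adj_iff.1 ?_).symm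
  rw [SimpleGraph.comap_adj, Equiv.apply_symm_apply]
  exact hG.adj_mate _

lemma adj_comap_swap [DecidableEq V] (hG : IsPerfectMatching G) {x y a p q : V}
    (hxy : G.Adj x y) (h : (G.comap (Equiv.swap y a)).Adj p q) :
    G.Adj p q ∨ s(p, q) = s(x, a) ∨ s(p, q) = s(y, mate G a) := by
  have hx : mate G y = x := (hG.adj_iff.1 hxy.symm).symm
  have hmm := hG.mate_mate
  have hne : ∀ v, mate G v ≠ v := fun v => (hG.adj_mate v).ne'
  rw [SimpleGraph.comap_adj, hG.adj_iff] at h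
  rw [hG.adj_iff, Sym2.eq_iff, Sym2.eq_iff]
  grind

end IsPerfectMatching

end PerfectMatching

section MatchingFamily

/-- A family of pairwise edge-disjoint perfect matchings, indexed by colours. This is `IsPMTuple`
for arbitrary vertex and colour types. -/
structure IsMatchingFamily (M : C → SimpleGraph V) : Prop where
  isPerfectMatching : ∀ c, IsPerfectMatching (M c)
  disjoint : ∀ c e, c ≠ e → Disjoint (M c) (M e)

lemma isPMTuple_iff_isMatchingFamily {n d : ℕ} {M : Fin d → SimpleGraph (Fin n)} :
    IsPMTuple M ↔ IsMatchingFamily M := by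
  constructor
  · exact fun h => ⟨fun c => isPerfectMatching_iff_card_neighborSet.2 (h.1 c), h.2⟩
  · exact fun h => ⟨fun c => isPerfectMatching_iff_card_neighborSet.1 (h.1 c), h.2⟩

open scoped Classical in
/-- The finite set of all families of edge-disjoint perfect matchings of the complete graph on
`V` with colours in `C`. -/
noncomputable def matchingFamilies (V C : Type*) [Fintype V] [DecidableEq V] [Fintype C]
    [DecidableEq C] : Finset (C → SimpleGraph V) :=
  {M | IsMatchingFamily M}

lemma mem_matchingFamilies [Fintype V] [DecidableEq V] [Fintype C] [DecidableEq C]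
    {M : C → SimpleGraph V} : M ∈ matchingFamilies V C ↔ IsMatchingFamily M := by
  simp [matchingFamilies]

/-- The perfect matching `{x, y}` with `x + y = g` of an additive group; the condition on `g`
excludes the loops. -/
def sumGraph {A : Type*} [AddCommGroup A] (g : A) (hg : ∀ x, x + x ≠ g) : SimpleGraph A where
  Adj x y := x + y = g
  symm := ⟨fun x y h => by rw [add_comm, h]⟩
  loopless := ⟨hg⟩

lemma isMatchingFamily_sumGraph {A : Type*} [AddCommGroup A] {g : C → A}
    (hg : ∀ c x, x + x ≠ g c) (hinj : Function.Injective g) :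
    IsMatchingFamily fun c => sumGraph (g c) (hg c) where
  isPerfectMatching c x := ⟨g c - x, fun _ => eq_sub_iff_add_eq'.symm⟩
  disjoint _ _ hce := SimpleGraph.disjoint_left.2 fun _ _ hc he =>
    hce (hinj (Eq.trans (Eq.symm hc) he))

lemma matchingFamilies_nonempty {n d : ℕ} (hn : Even n) (hn0 : 0 < n) (hd : 2 * d ≤ n) :
    (matchingFamilies (Fin n) (Fin d)).Nonempty := by
  have : NeZero n := ⟨hn0.ne'⟩
  let odd (c : Fin d) : Fin n := ⟨2 * c + 1, by omega⟩
  have hodd : ∀ c x, x + x ≠ odd c := by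
    intro c x h
    obtain ⟨m, rfl⟩ := hn.two_dvd
    have hval : 2 * (x.val % m) = 2 * c + 1 := by
      rw [← Nat.mul_mod_mul_left, two_mul (x : ℕ), ← Fin.val_add, h]
    omega
  have hinj : Function.Injective odd := by
    intro c e h
    have hval : 2 * c.val + 1 = 2 * e + 1 := congrArg Fin.val h
    exact Fin.ext (by omega)
  exact ⟨_, mem_matchingFamilies.2 (isMatchingFamily_sumGraph hodd hinj)⟩

end MatchingFamily

section Word

/-- The end vertex of the walk from `r` whose steps have the colours in the word `w`, read from
right to left. -/
noncomputable def wordEnd (M : C → SimpleGraph V) (w : List C) (r : V) : V :=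
  w.foldr (fun c v => mate (M c) v) r

/-- The vertices of the walk from `r` that follows the colours of `w` from right to left, the
last vertex coming first. -/
noncomputable def wordPath (M : C → SimpleGraph V) (w : List C) (r : V) : List V :=
  w.scanr (fun c v => mate (M c) v) r

variable {M : C → SimpleGraph V}

lemma wordEnd_cons (c : C) (w : List C) (r : V) :
    wordEnd M (c :: w) r = mate (M c) (wordEnd M w r) := rfl

lemma wordPath_cons (c : C) (w : List C) (r : V) :
    wordPath M (c :: w) r = wordEnd M (c :: w) r :: wordPath M w r :=
  List.scanr_cons

lemma head?_wordPath (w : List C) (r : V) : (wordPath M w r).head? = some (wordEnd M w r) :=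
  List.head?_scanr

lemma wordEnd_mem_wordPath (w : List C) (r : V) : wordEnd M w r ∈ wordPath M w r :=
  List.mem_of_head? (head?_wordPath w r)

lemma length_wordPath (w : List C) (r : V) : (wordPath M w r).length = w.length + 1 :=
  List.length_scanr

lemma wordEnd_eq_of_wordPath_eq_support {G : SimpleGraph V} {w : List C} {r u v : V}
    {p : G.Walk u v} (h : wordPath M w r = p.support) : wordEnd M w r = u := by
  have hhead := head?_wordPath (M := M) w r
  rw [h, ← p.cons_tail_support] at hhead
  exact (Option.some.inj hhead).symm

end Word

section Switching

variable [DecidableEq V] [DecidableEq C] {M : C → SimpleGraph V} {c : C}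

/-- The switching of `M` in colour `c` that exchanges the roles of `y` and `a`: if `xy` and `ab`
are edges of colour `c`, then they are replaced by `xa` and `yb`. -/
def switch (M : C → SimpleGraph V) (c : C) (y a : V) : C → SimpleGraph V :=
  Function.update M c ((M c).comap (Equiv.swap y a))

lemma switch_self (M : C → SimpleGraph V) (c : C) (y a : V) :
    switch M c y a c = (M c).comap (Equiv.swap y a) :=
  Function.update_self ..

lemma switch_of_ne {e : C} (he : e ≠ c) (M : C → SimpleGraph V) (y a : V) :
    switch M c y a e = M e :=
  Function.update_of_ne he ..

lemma switch_switch (M : C → SimpleGraph V) (c : C) (y a : V) :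
    switch (switch M c y a) c y a = M := by
  have hinv : Equiv.swap y a ∘ Equiv.swap y a = id := by
    ext v
    simp
  rw [switch, switch_self, switch, Function.update_idem, SimpleGraph.comap_comap, hinv,
    SimpleGraph.comap_id, Function.update_eq_self]

lemma isMatchingFamily_switch (hM : IsMatchingFamily M) {x y a : V} (hxy : (M c).Adj x y)
    (hxa : ∀ e, ¬ (M e).Adj x a) (hyb : ∀ e, ¬ (M e).Adj y (mate (M c) a)) :
    IsMatchingFamily (switch M c y a) := by
  have hdisj : ∀ e, e ≠ c → Disjoint ((M c).comap (Equiv.swap y a)) (M e) := by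
    refine fun e he => SimpleGraph.disjoint_left.2 fun p q hpq hpqe => ?_
    rcases (hM.isPerfectMatching c).adj_comap_swap hxy hpq with h | h | h
    · exact SimpleGraph.disjoint_left.1 (hM.disjoint c e he.symm) p q h hpqe
    · exact hxa e ((SimpleGraph.adj_congr_of_sym2 _ h).1 hpqe)
    · exact hyb e ((SimpleGraph.adj_congr_of_sym2 _ h).1 hpqe)
  constructor
  · intro e
    rcases eq_or_ne e c with rfl | he
    · rw [switch_self]
      exact (hM.isPerfectMatching e).comap _
    · rw [switch_of_ne he]
      exact hM.isPerfectMatching e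
  · intro e f hef
    rcases eq_or_ne e c with rfl | he
    · rw [switch_self, switch_of_ne hef.symm]
      exact hdisj f hef.symm
    rcases eq_or_ne f c with rfl | hf
    · rw [switch_self, switch_of_ne he]
      exact (hdisj e he).symm
    · rw [switch_of_ne he, switch_of_ne hf]
      exact hM.disjoint e f hef

lemma mate_switch (hM : IsMatchingFamily M) (y a v : V) :
    mate (switch M c y a c) v = Equiv.swap y a (mate (M c) (Equiv.swap y a v)) := by
  rw [switch_self, (hM.isPerfectMatching c).mate_comap, Equiv.symm_swap]

lemma wordEnd_switch_of_notMem {w : List C} (hc : c ∉ w) (y a r : V) :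
    wordEnd (switch M c y a) w r = wordEnd M w r :=
  List.foldr_ext _ _ _ fun e he _ => by rw [switch_of_ne (ne_of_mem_of_not_mem he hc)]

lemma wordEnd_switch_of_notMem_wordPath (hM : IsMatchingFamily M) {w : List C} {y a r : V}
    (hy : y ∉ wordPath M w r) (ha : a ∉ wordPath M w r) :
    wordEnd (switch M c y a) w r = wordEnd M w r := by
  induction w with
  | nil => rfl
  | cons e w ih =>
    rw [wordPath_cons, List.mem_cons, not_or] at hy ha
    rw [wordEnd_cons, ih hy.2 ha.2]
    rcases eq_or_ne e c with rfl | he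
    · have hmem := wordEnd_mem_wordPath (M := M) w r
      rw [mate_switch hM, Equiv.swap_apply_of_ne_of_ne (ne_of_mem_of_not_mem hmem hy.2)
        (ne_of_mem_of_not_mem hmem ha.2), ← wordEnd_cons,
        Equiv.swap_apply_of_ne_of_ne (Ne.symm hy.1) (Ne.symm ha.1)]
    · rw [switch_of_ne he, wordEnd_cons]

lemma mate_switch_wordEnd (hM : IsMatchingFamily M) {w : List C} {r a : V}
    (hy : wordEnd M (c :: w) r ∉ wordPath M w r) (ha : a ∉ wordPath M w r) :
    mate (switch M c (wordEnd M (c :: w) r) a c) (wordEnd M w r) = a := by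
  have hmem := wordEnd_mem_wordPath (M := M) w r
  rw [mate_switch hM, Equiv.swap_apply_of_ne_of_ne (ne_of_mem_of_not_mem hmem hy)
    (ne_of_mem_of_not_mem hmem ha), ← wordEnd_cons, Equiv.swap_apply_left]

end Switching

section SwitchForbidden

variable [DecidableEq V] [Fintype C] {M : C → SimpleGraph V} {c : C}

/-- The vertices `a` for which switching the last step `xy` of the walk with colours `c :: w` to
`xa` could change the walk with colours `w` or create a double edge. -/
noncomputable def switchForbidden (M : C → SimpleGraph V) (c : C) (w : List C) (r : V) :
    Finset V :=
  (wordPath M w r).toFinset ∪ univ.image (fun e => mate (M e) (wordEnd M w r)) ∪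
    univ.image (fun e => mate (M c) (mate (M e) (wordEnd M (c :: w) r)))

lemma card_switchForbidden_le (M : C → SimpleGraph V) (c : C) (w : List C) (r : V) :
    #(switchForbidden M c w r) ≤ w.length + 1 + 2 * Fintype.card C := by
  have himage (f : C → V) : #(univ.image f) ≤ Fintype.card C := card_image_le
  have hpath : #(wordPath M w r).toFinset ≤ w.length + 1 :=
    (List.toFinset_card_le _).trans (length_wordPath w r).le
  rw [two_mul, ← add_assoc]
  exact (card_union_le _ _).trans
    (add_le_add ((card_union_le _ _).trans (add_le_add hpath (himage _))) (himage _))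

lemma notMem_switchForbidden {w : List C} {r a : V} :
    a ∉ switchForbidden M c w r ↔ a ∉ wordPath M w r ∧ (∀ e, mate (M e) (wordEnd M w r) ≠ a) ∧
      ∀ e, mate (M c) (mate (M e) (wordEnd M (c :: w) r)) ≠ a := by
  simp only [switchForbidden, mem_union, List.mem_toFinset, mem_image, mem_univ, true_and,
    not_or, not_exists, and_assoc, ne_eq]

lemma isMatchingFamily_switch_wordEnd [DecidableEq C] (hM : IsMatchingFamily M) {w : List C}
    {r a : V} (ha : a ∉ switchForbidden M c w r) :
    IsMatchingFamily (switch M c (wordEnd M (c :: w) r) a) := by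
  obtain ⟨-, hxa, hyb⟩ := notMem_switchForbidden.1 ha
  have hmatch := hM.isPerfectMatching
  refine isMatchingFamily_switch hM ((hmatch c).adj_mate (wordEnd M w r)) (fun e h => ?_)
    (fun e h => ?_)
  · exact hxa e ((hmatch e).adj_iff.1 h).symm
  · refine hyb e ?_
    rw [← (hmatch e).adj_iff.1 h, (hmatch c).mate_mate]

end SwitchForbidden

section Counting

lemma card_mul_le_card_of_leftInverse {α β γ : Type*} {s : Finset α} {t : Finset β} {m : ℕ}
    {A : α → Finset γ} {f : α → γ → β} (g : β → α × γ) (hA : ∀ a ∈ s, m ≤ #(A a))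
    (hf : ∀ a ∈ s, ∀ b ∈ A a, f a b ∈ t) (hg : ∀ a ∈ s, ∀ b ∈ A a, g (f a b) = (a, b)) :
    #s * m ≤ #t := by
  calc #s * m ≤ #(s.sigma A) := by
        rw [card_sigma, ← smul_eq_mul]
        exact card_nsmul_le_sum _ _ _ hA
    _ ≤ #t := by
        refine card_le_card_of_injOn (fun P => f P.1 P.2) (fun P hP => ?_) ?_
        · exact hf P.1 (mem_sigma.1 hP).1 P.2 (mem_sigma.1 hP).2
        · rintro ⟨a, b⟩ hP ⟨a', b'⟩ hQ h
          have hab := hg a (mem_sigma.1 hP).1 b (mem_sigma.1 hP).2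
          rw [show f a b = f a' b' from h, hg a' (mem_sigma.1 hQ).1 b' (mem_sigma.1 hQ).2] at hab
          obtain ⟨rfl, rfl⟩ := Prod.mk.inj hab
          rfl

lemma card_mul_le_card_mul_of_subset_biUnion {ι α : Type*} [DecidableEq α] {s : Finset ι}
    {B : Finset α} {t : ι → Finset α} {m N : ℕ} (hB : B ⊆ s.biUnion t)
    (ht : ∀ i ∈ s, #(t i) * m ≤ N) : #B * m ≤ #s * N :=
  calc #B * m ≤ (∑ i ∈ s, #(t i)) * m :=
        Nat.mul_le_mul_right _ ((card_le_card hB).trans card_biUnion_le)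
    _ = ∑ i ∈ s, #(t i) * m := sum_mul ..
    _ ≤ #s * N := sum_le_card_nsmul _ _ _ ht

open scoped Classical in
lemma card_wordEnd_cons_eq_mul_le [Fintype V] [DecidableEq V] [Fintype C] [DecidableEq C] (r : V)
    {c : C} (w : List C) {w' : List C} (hc : c ∉ w') :
    #{M ∈ matchingFamilies V C | wordEnd M (c :: w) r ∉ wordPath M w r ∧
        wordEnd M (c :: w) r = wordEnd M w' r} *
      (Fintype.card V - (w.length + 1 + 2 * Fintype.card C)) ≤ #(matchingFamilies V C) := by
  -- `x`, `a` and `y` are read off the switched family as the end of `w`, its mate and the end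
  -- of `w'`, neither walk being affected by the switching.
  refine card_mul_le_card_of_leftInverse
    (A := fun M => (switchForbidden M c w r)ᶜ) (f := fun M a => switch M c (wordEnd M (c :: w) r) a)
    (fun N => (switch N c (wordEnd N w' r) (mate (N c) (wordEnd N w r)),
      mate (N c) (wordEnd N w r))) ?_ ?_ ?_
  · intro M _
    rw [card_compl]
    exact Nat.sub_le_sub_left (card_switchForbidden_le M c w r) _
  · intro M hM a ha
    have hfam := mem_matchingFamilies.1 (mem_filter.1 hM).1
    exact mem_matchingFamilies.2 (isMatchingFamily_switch_wordEnd hfam (mem_compl.1 ha))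
  · intro M hM a ha
    obtain ⟨hfam, hy, hend⟩ := mem_filter.1 hM
    rw [mem_matchingFamilies] at hfam
    have hapath := (notMem_switchForbidden.1 (mem_compl.1 ha)).1
    rw [wordEnd_switch_of_notMem_wordPath hfam hy hapath, wordEnd_switch_of_notMem hc,
      mate_switch_wordEnd hfam hy hapath, ← hend, switch_switch]

open scoped Classical in
lemma card_wordEnd_eq_mul_le [Fintype V] [DecidableEq V] [Fintype C] [DecidableEq C] (r : V)
    {w w' : List C} (hdisj : w.Disjoint w') :
    #{M ∈ matchingFamilies V C | (wordPath M w r).Nodup ∧ wordEnd M w r ≠ r ∧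
        wordEnd M w r = wordEnd M w' r} *
      (Fintype.card V - (w.length + 2 * Fintype.card C)) ≤ #(matchingFamilies V C) := by
  cases w with
  | nil => simp [wordEnd]
  | cons c w =>
    refine le_trans (Nat.mul_le_mul_right _ (card_le_card ?_))
      (card_wordEnd_cons_eq_mul_le r w (hdisj List.mem_cons_self))
    refine monotone_filter_right _ fun M _ hM => ?_
    obtain ⟨hnodup, -, hend⟩ := hM
    rw [wordPath_cons] at hnodup
    exact ⟨(List.nodup_cons.1 hnodup).1, hend⟩

end Counting

section ReducedWord

variable [DecidableEq C] {S : Finset C} {q : ℕ}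

/-- The words of length `n` over the alphabet `S` without two equal consecutive letters. -/
def reducedWords (S : Finset C) : ℕ → Finset (List C)
  | 0 => {[]}
  | n + 1 => (reducedWords S n).biUnion fun w => {c ∈ S | c ∉ w.head?}.image (· :: w)

/-- The words of length at most `L` over the alphabet `S` without two equal consecutive letters. -/
def reducedWordsUpTo (S : Finset C) (L : ℕ) : Finset (List C) :=
  (range (L + 1)).biUnion (reducedWords S)

lemma mem_reducedWords {n : ℕ} {w : List C} :
    w ∈ reducedWords S n ↔ w.length = n ∧ (∀ c ∈ w, c ∈ S) ∧ w.IsChain (· ≠ ·) := by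
  induction n generalizing w with
  | zero =>
    rw [reducedWords, mem_singleton, List.length_eq_zero_iff]
    exact ⟨by rintro rfl; simp, And.left⟩
  | succ n ih =>
    cases w with
    | nil => simp [reducedWords]
    | cons c w =>
      simp only [reducedWords, mem_biUnion, mem_image, mem_filter, List.cons.injEq,
        List.length_cons, List.forall_mem_cons, List.isChain_cons]
      grind

lemma mem_reducedWordsUpTo {L : ℕ} {w : List C} :
    w ∈ reducedWordsUpTo S L ↔ w.length ≤ L ∧ (∀ c ∈ w, c ∈ S) ∧ w.IsChain (· ≠ ·) := by
  simp only [reducedWordsUpTo, mem_biUnion, mem_range, mem_reducedWords]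
  grind

lemma card_reducedWords_succ_le (hS : #S ≤ q + 1) (n : ℕ) :
    #(reducedWords S (n + 1)) ≤ (q + 1) * q ^ n := by
  induction n with
  | zero =>
    rw [reducedWords, reducedWords, singleton_biUnion, pow_zero, mul_one]
    exact card_image_le.trans ((card_filter_le _ _).trans hS)
  | succ n ih =>
    have hext : ∀ w ∈ reducedWords S (n + 1), #({c ∈ S | c ∉ w.head?}.image (· :: w)) ≤ q := by
      intro w hw
      obtain ⟨hlen, hmem, -⟩ := mem_reducedWords.1 hw
      obtain ⟨c, w, rfl⟩ := List.exists_cons_of_length_eq_add_one hlen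
      have herase : {e ∈ S | e ∉ (c :: w).head?} = S.erase c := by
        ext e
        simp [and_comm, eq_comm]
      rw [herase]
      refine card_image_le.trans ?_
      rw [card_erase_of_mem (hmem c List.mem_cons_self)]
      omega
    calc #(reducedWords S (n + 1 + 1)) ≤ #(reducedWords S (n + 1)) * q :=
          card_biUnion_le_card_mul _ _ _ hext
      _ ≤ (q + 1) * q ^ n * q := Nat.mul_le_mul_right _ ih
      _ = (q + 1) * q ^ (n + 1) := by ring

lemma card_reducedWordsUpTo_le (hq : 2 ≤ q) (hS : #S ≤ q + 1) (L : ℕ) :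
    #(reducedWordsUpTo S L) ≤ (q + 1) * q ^ L := by
  refine card_biUnion_le.trans ?_
  induction L with
  | zero => simp [reducedWords]
  | succ L ih =>
    calc ∑ n ∈ range (L + 1 + 1), #(reducedWords S n)
        ≤ (q + 1) * q ^ L + (q + 1) * q ^ L := by
          rw [sum_range_succ]
          exact add_le_add ih (card_reducedWords_succ_le hS L)
      _ = (q + 1) * q ^ L * 2 := (mul_two _).symm
      _ ≤ (q + 1) * q ^ L * q := Nat.mul_le_mul_left _ hq
      _ = (q + 1) * q ^ (L + 1) := by ring

lemma exists_reducedWord_wordPath_eq_support {M : C → SimpleGraph V} (hM : IsMatchingFamily M)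
    {u r : V} (p : (⨆ c ∈ S, M c).Walk u r) (hp : p.IsPath) :
    ∃ w ∈ reducedWords S p.length, wordPath M w r = p.support := by
  induction p with
  | nil => exact ⟨[], by simp [reducedWords], by simp [wordPath]⟩
  | @cons u v r h p ih =>
    obtain ⟨hp, hu⟩ := (SimpleGraph.Walk.cons_isPath_iff h p).1 hp
    obtain ⟨w, hw, hpath⟩ := ih hp
    obtain ⟨hlen, hmem, hchain⟩ := mem_reducedWords.1 hw
    have hend := wordEnd_eq_of_wordPath_eq_support hpath
    obtain ⟨c, hc, hadj⟩ : ∃ c ∈ S, (M c).Adj u v := by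
      simpa only [SimpleGraph.iSup_adj, exists_prop] using h
    have hcons : wordEnd M (c :: w) r = u := by
      rw [wordEnd_cons, hend, (hM.isPerfectMatching c).adj_iff.1 hadj.symm]
    -- Repeating a colour means walking straight back, which a path does not do.
    have hne : ∀ e ∈ w.head?, c ≠ e := by
      rintro e he rfl
      obtain ⟨w, rfl⟩ := List.head?_eq_some_iff.1 he
      rw [wordEnd_cons, wordEnd_cons, (hM.isPerfectMatching c).mate_mate] at hcons
      rw [← hpath, wordPath_cons, ← hcons] at hu
      exact hu (List.mem_cons_of_mem _ (wordEnd_mem_wordPath w r))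
    refine ⟨c :: w, mem_reducedWords.2 ⟨by simp [hlen], ?_, List.isChain_cons.2 ⟨hne, hchain⟩⟩, ?_⟩
    · exact List.forall_mem_cons.2 ⟨hc, hmem⟩
    · rw [wordPath_cons, hcons, hpath, SimpleGraph.Walk.support_cons]

lemma exists_reducedWord_of_dist_le {M : C → SimpleGraph V} (hM : IsMatchingFamily M) {u r : V}
    {L : ℕ} (hreach : (⨆ c ∈ S, M c).Reachable u r) (hdist : (⨆ c ∈ S, M c).dist u r ≤ L) :
    ∃ w ∈ reducedWordsUpTo S L, (wordPath M w r).Nodup ∧ wordEnd M w r = u := by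
  obtain ⟨p, hp, hlen⟩ := hreach.exists_path_of_dist
  obtain ⟨w, hw, hpath⟩ := exists_reducedWord_wordPath_eq_support hM p hp
  refine ⟨w, ?_, hpath ▸ hp.support_nodup, ?_⟩
  · exact mem_biUnion.2 ⟨p.length, by rw [mem_range]; omega, hw⟩
  · exact wordEnd_eq_of_wordPath_eq_support hpath

end ReducedWord

section UnionBound

variable [Fintype V] [DecidableEq V] [Fintype C] [DecidableEq C] {S S' : Finset C} {q : ℕ}

open scoped Classical in
lemma card_exists_ne_dist_le_mul_le (hq : 2 ≤ q) (hS : #S ≤ q + 1) (hS' : #S' ≤ q + 1)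
    (hdisj : Disjoint S S') (r : V) (L : ℕ) :
    #{M ∈ matchingFamilies V C | ∃ u, u ≠ r ∧
        ((⨆ c ∈ S, M c).Reachable u r ∧ (⨆ c ∈ S, M c).dist u r ≤ L) ∧
        ((⨆ c ∈ S', M c).Reachable u r ∧ (⨆ c ∈ S', M c).dist u r ≤ L)} *
      (Fintype.card V - (L + 2 * Fintype.card C)) ≤
    ((q + 1) * q ^ L) ^ 2 * #(matchingFamilies V C) := by
  refine (card_mul_le_card_mul_of_subset_biUnion
    (s := reducedWordsUpTo S L ×ˢ reducedWordsUpTo S' L) (N := #(matchingFamilies V C))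
    (t := fun ww => {M ∈ matchingFamilies V C | (wordPath M ww.1 r).Nodup ∧
      wordEnd M ww.1 r ≠ r ∧ wordEnd M ww.1 r = wordEnd M ww.2 r}) ?_ ?_).trans ?_
  · intro M hM
    obtain ⟨hfam, u, hur, ⟨hreach, hdist⟩, hreach', hdist'⟩ := mem_filter.1 hM
    have hMF := mem_matchingFamilies.1 hfam
    obtain ⟨w, hw, hnodup, hend⟩ := exists_reducedWord_of_dist_le hMF hreach hdist
    obtain ⟨w', hw', -, hend'⟩ := exists_reducedWord_of_dist_le hMF hreach' hdist'
    exact mem_biUnion.2 ⟨(w, w'), mem_product.2 ⟨hw, hw'⟩,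
      mem_filter.2 ⟨hfam, hnodup, hend ▸ hur, hend.trans hend'.symm⟩⟩
  · rintro ⟨w, w'⟩ hww
    obtain ⟨hw, hw'⟩ := mem_product.1 hww
    obtain ⟨hlen, hmem, -⟩ := mem_reducedWordsUpTo.1 hw
    have hww' : w.Disjoint w' := fun c hc hc' =>
      disjoint_left.1 hdisj (hmem c hc) ((mem_reducedWordsUpTo.1 hw').2.1 c hc')
    refine le_trans (Nat.mul_le_mul_left _ ?_) (card_wordEnd_eq_mul_le r hww')
    exact Nat.sub_le_sub_left (Nat.add_le_add_right hlen _) _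
  · rw [card_product, sq]
    exact Nat.mul_le_mul_right _
      (Nat.mul_le_mul (card_reducedWordsUpTo_le hq hS L) (card_reducedWordsUpTo_le hq hS' L))

end UnionBound

section GroupGraph

variable {n d : ℕ}

/-- The colours of the matchings that make up the `i`-th group graph. -/
def groupColours (d i : ℕ) : Finset (Fin d) :=
  {c | c.val = 4 * i ∨ c.val = 4 * i + 1 ∨ c.val = 4 * i + 2}

lemma card_groupColours_le (d i : ℕ) : #(groupColours d i) ≤ 3 := by
  refine (card_le_card_of_injOn Fin.val (t := {4 * i, 4 * i + 1, 4 * i + 2}) ?_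
    Fin.val_injective.injOn).trans card_le_three
  intro c hc
  simpa [groupColours] using hc

lemma disjoint_groupColours {i j : ℕ} (hij : i ≠ j) :
    Disjoint (groupColours d i) (groupColours d j) := by
  refine disjoint_left.2 fun c hi hj => ?_
  simp only [groupColours, mem_filter_univ] at hi hj
  omega

lemma groupGraph_eq_iSup_groupColours (M : Fin d → SimpleGraph (Fin n)) (i : ℕ) :
    groupGraph M i = ⨆ c ∈ groupColours d i, M c := by
  simp only [groupGraph, groupColours, mem_filter_univ]

/-- The balls of radius `ρ` around `r` in the `⌊d / 4⌋` group graphs of `M` have pairwise no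
vertex other than `r` in common. -/
def GroupBallsMeetOnlyAt (M : Fin d → SimpleGraph (Fin n)) (r : Fin n) (ρ : ℝ) : Prop :=
  ∀ u, u ≠ r → ∀ i j, i < d / 4 → j < d / 4 →
    ((groupGraph M i).Reachable u r ∧ ((groupGraph M i).dist u r : ℝ) ≤ ρ) →
    ((groupGraph M j).Reachable u r ∧ ((groupGraph M j).dist u r : ℝ) ≤ ρ) → i = j

open scoped Classical in
lemma card_not_groupBallsMeetOnlyAt_mul_sub_le (r : Fin n) (ρ : ℝ) :
    #{M ∈ matchingFamilies (Fin n) (Fin d) | ¬ GroupBallsMeetOnlyAt M r ρ} *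
      (n - (⌊ρ⌋₊ + 2 * d)) ≤
    (d / 4) ^ 2 * ((3 * 2 ^ ⌊ρ⌋₊) ^ 2 * #(matchingFamilies (Fin n) (Fin d))) := by
  have hpairs : #(range (d / 4)).offDiag ≤ (d / 4) ^ 2 := by
    rw [offDiag_card, card_range, sq]
    exact Nat.sub_le _ _
  refine le_trans (card_mul_le_card_mul_of_subset_biUnion (s := (range (d / 4)).offDiag)
    (t := fun ij => {M ∈ matchingFamilies (Fin n) (Fin d) | ∃ u, u ≠ r ∧
      ((⨆ c ∈ groupColours d ij.1, M c).Reachable u r ∧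
        (⨆ c ∈ groupColours d ij.1, M c).dist u r ≤ ⌊ρ⌋₊) ∧
      ((⨆ c ∈ groupColours d ij.2, M c).Reachable u r ∧
        (⨆ c ∈ groupColours d ij.2, M c).dist u r ≤ ⌊ρ⌋₊)}) ?_ ?_)
    (Nat.mul_le_mul_right _ hpairs)
  · intro M hM
    obtain ⟨hfam, hmeet⟩ := mem_filter.1 hM
    simp only [GroupBallsMeetOnlyAt, groupGraph_eq_iSup_groupColours, not_forall] at hmeet
    obtain ⟨u, hur, i, j, hi, hj, ⟨hreach, hdist⟩, ⟨hreach', hdist'⟩, hij⟩ := hmeet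
    exact mem_biUnion.2 ⟨(i, j), mem_offDiag.2 ⟨mem_range.2 hi, mem_range.2 hj, hij⟩,
      mem_filter.2 ⟨hfam, u, hur, ⟨hreach, Nat.le_floor hdist⟩, hreach', Nat.le_floor hdist'⟩⟩
  · rintro ⟨i, j⟩ hij
    have hcount := card_exists_ne_dist_le_mul_le le_rfl (card_groupColours_le d i)
      (card_groupColours_le d j) (disjoint_groupColours (mem_offDiag.1 hij).2.2) r ⌊ρ⌋₊
    rw [Fintype.card_fin, Fintype.card_fin] at hcount
    convert hcount

lemma two_mul_add_le_of_two_mul_sq_mul_four_pow_le {L : ℕ} (hd : 4 ≤ d)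
    (h : 2 * d ^ 2 * 4 ^ L ≤ n) : 2 * (L + 2 * d) ≤ n := by
  have hL : L < 4 ^ L := Nat.lt_pow_self (by norm_num)
  have hsq : 4 * d ≤ d ^ 2 := by
    rw [sq]
    exact Nat.mul_le_mul_right d hd
  calc 2 * (L + 2 * d) ≤ 2 * 4 ^ L + d ^ 2 := by omega
    _ ≤ 2 * d ^ 2 * 4 ^ L := by nlinarith
    _ ≤ n := h

open scoped Classical in
lemma card_not_groupBallsMeetOnlyAt_mul_le (r : Fin n) (ρ : ℝ) :
    #{M ∈ matchingFamilies (Fin n) (Fin d) | ¬ GroupBallsMeetOnlyAt M r ρ} * n ≤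
      2 * d ^ 2 * 4 ^ ⌊ρ⌋₊ * #(matchingFamilies (Fin n) (Fin d)) := by
  have hbound := card_not_groupBallsMeetOnlyAt_mul_sub_le (d := d) r ρ
  set B := #{M ∈ matchingFamilies (Fin n) (Fin d) | ¬ GroupBallsMeetOnlyAt M r ρ} with hB
  set T := #(matchingFamilies (Fin n) (Fin d))
  set L := ⌊ρ⌋₊
  have hBT : B ≤ T := card_filter_le _ _
  rcases lt_or_ge d 4 with hd | hd
  · have hB0 : B = 0 := by
      rw [hB, card_eq_zero, filter_eq_empty_iff]
      intro M _ hM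
      exact hM fun u _ i _ hi => absurd hi (by omega)
    simp [hB0]
  rcases le_total n (2 * d ^ 2 * 4 ^ L) with hn | hn
  · rw [mul_comm]
    exact Nat.mul_le_mul hn hBT
  have hhalf := two_mul_add_le_of_two_mul_sq_mul_four_pow_le hd hn
  have hd4 : 9 * (d / 4) ^ 2 ≤ d ^ 2 := by
    have := Nat.pow_le_pow_left (Nat.mul_div_le d 4) 2
    nlinarith
  calc B * n ≤ B * (2 * (n - (L + 2 * d))) := Nat.mul_le_mul_left _ (by omega)
    _ = 2 * (B * (n - (L + 2 * d))) := by ring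
    _ ≤ 2 * ((d / 4) ^ 2 * ((3 * 2 ^ L) ^ 2 * T)) := Nat.mul_le_mul_left _ hbound
    _ = 2 * (9 * (d / 4) ^ 2) * 4 ^ L * T := by
        rw [show 4 ^ L = (2 ^ L) ^ 2 by rw [← pow_mul', pow_mul]; norm_num]
        ring
    _ ≤ 2 * d ^ 2 * 4 ^ L * T := by gcongr

end GroupGraph

section Probability

variable {n d : ℕ}

lemma tupleProb_eq_card_div_card (A : (Fin d → SimpleGraph (Fin n)) → Prop) [DecidablePred A] :
    tupleProb n d A = (#{M ∈ matchingFamilies (Fin n) (Fin d) | A M} : ℝ) /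
      #(matchingFamilies (Fin n) (Fin d)) := by
  simp only [tupleProb, matchingFamilies, filter_filter]
  congr! <;> exact funext fun _ => propext isPMTuple_iff_isMatchingFamily

lemma tupleProb_le_one (A : (Fin d → SimpleGraph (Fin n)) → Prop) : tupleProb n d A ≤ 1 := by
  classical
  rw [tupleProb_eq_card_div_card]
  exact div_le_one_of_le₀ (mod_cast card_filter_le _ _) (Nat.cast_nonneg _)

lemma tupleProb_eq_one_sub (h : (matchingFamilies (Fin n) (Fin d)).Nonempty)
    (A : (Fin d → SimpleGraph (Fin n)) → Prop) :
    tupleProb n d A = 1 - tupleProb n d fun M => ¬ A M := by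
  classical
  have hpos : (0 : ℝ) < #(matchingFamilies (Fin n) (Fin d)) := mod_cast h.card_pos
  rw [eq_sub_iff_add_eq, tupleProb_eq_card_div_card, tupleProb_eq_card_div_card, ← add_div,
    div_eq_one_iff_eq hpos.ne']
  norm_cast
  exact card_filter_add_card_filter_not A

lemma rootProb_eq_sum_tupleProb_div (A : (Fin d → SimpleGraph (Fin n)) → Fin n → Prop) :
    rootProb n d A = (∑ r, tupleProb n d fun M => A M r) / n := by
  classical
  have hden : #{P : (Fin d → SimpleGraph (Fin n)) × Fin n | IsPMTuple P.1} =
      #{M : Fin d → SimpleGraph (Fin n) | IsPMTuple M} * n := by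
    rw [← univ_product_univ, filter_product_left IsPMTuple, card_product, card_univ,
      Fintype.card_fin]
  have hnum : #{P : (Fin d → SimpleGraph (Fin n)) × Fin n | IsPMTuple P.1 ∧ A P.1 P.2} =
      ∑ r, #{M : Fin d → SimpleGraph (Fin n) | IsPMTuple M ∧ A M r} := by
    simp only [card_filter, Fintype.sum_prod_type_right]
  simp only [rootProb, tupleProb, ← sum_div, div_div]
  rw [hden, hnum, Nat.cast_mul, Nat.cast_sum]

lemma rootProb_le_one (A : (Fin d → SimpleGraph (Fin n)) → Fin n → Prop) :
    rootProb n d A ≤ 1 := by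
  rw [rootProb_eq_sum_tupleProb_div]
  refine div_le_one_of_le₀ ?_ (Nat.cast_nonneg _)
  simpa using sum_le_card_nsmul univ _ 1 fun r _ => tupleProb_le_one fun M => A M r

lemma le_rootProb (hn : 0 < n) {p : ℝ} {A : (Fin d → SimpleGraph (Fin n)) → Fin n → Prop}
    (h : ∀ r, p ≤ tupleProb n d fun M => A M r) : p ≤ rootProb n d A := by
  rw [rootProb_eq_sum_tupleProb_div, le_div_iff₀ (mod_cast hn), mul_comm]
  simpa using card_nsmul_le_sum univ _ p fun r _ => h r

lemma tupleProb_not_groupBallsMeetOnlyAt_le (r : Fin n) {ρ : ℝ} (hρ : 0 ≤ ρ) :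
    (tupleProb n d fun M => ¬ GroupBallsMeetOnlyAt M r ρ) ≤ 2 * (d ^ 2 * 4 ^ ρ / n) := by
  classical
  have hn : (0 : ℝ) < n := mod_cast r.pos
  rw [tupleProb_eq_card_div_card]
  refine div_le_of_le_mul₀ (Nat.cast_nonneg _) (by positivity) ?_
  have hfloor : (4 : ℝ) ^ ⌊ρ⌋₊ ≤ 4 ^ ρ := by
    rw [← Real.rpow_natCast]
    exact Real.rpow_le_rpow_of_exponent_le (by norm_num) (Nat.floor_le hρ)
  rw [← mul_div_assoc, div_mul_eq_mul_div, le_div_iff₀ hn]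
  calc _ ≤ 2 * (d : ℝ) ^ 2 * 4 ^ ⌊ρ⌋₊ * #(matchingFamilies (Fin n) (Fin d)) :=
        mod_cast card_not_groupBallsMeetOnlyAt_mul_le (d := d) r ρ
    _ ≤ 2 * (d ^ 2 * 4 ^ ρ) * #(matchingFamilies (Fin n) (Fin d)) := by
        rw [← mul_assoc]
        gcongr

lemma one_sub_le_rootProb_groupBallsMeetOnlyAt (hn : Even n) (hn0 : 0 < n) (hd : 2 * d ≤ n)
    {ρ : ℝ} (hρ : 0 ≤ ρ) :
    1 - 2 * (d ^ 2 * 4 ^ ρ / n) ≤ rootProb n d fun M r => GroupBallsMeetOnlyAt M r ρ := by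
  refine le_rootProb hn0 fun r => ?_
  rw [tupleProb_eq_one_sub (matchingFamilies_nonempty hn hn0 hd)]
  exact sub_le_sub_left (tupleProb_not_groupBallsMeetOnlyAt_le r hρ) 1

end Probability

section Asymptotics

open Filter Topology

theorem stmt18_general (d : ℕ → ℕ) (ρ : ℕ → ℝ)
    (hρ : ∀ᶠ n in atTop ⊓ 𝓟 {n : ℕ | Even n}, 0 ≤ ρ n)
    (hdρ : Tendsto (fun n : ℕ => (d n : ℝ) ^ 2 * 4 ^ ρ n / n) (atTop ⊓ 𝓟 {n : ℕ | Even n})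
      (𝓝 0)) :
    Tendsto (fun n : ℕ => rootProb n (d n) fun M r => GroupBallsMeetOnlyAt M r (ρ n))
      (atTop ⊓ 𝓟 {n : ℕ | Even n}) (𝓝 1) := by
  have hlower : Tendsto (fun n : ℕ => 1 - 2 * ((d n : ℝ) ^ 2 * 4 ^ ρ n / n))
      (atTop ⊓ 𝓟 {n : ℕ | Even n}) (𝓝 1) := by
    simpa using (hdρ.const_mul 2).const_sub 1
  refine tendsto_of_tendsto_of_tendsto_of_le_of_le' hlower tendsto_const_nhds ?_
    (.of_forall fun n => rootProb_le_one _)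
  have heven : ∀ᶠ n : ℕ in atTop ⊓ 𝓟 {n : ℕ | Even n}, Even n :=
    mem_inf_of_right (mem_principal_self _)
  have hlarge : ∀ᶠ n : ℕ in atTop ⊓ 𝓟 {n : ℕ | Even n}, 2 ≤ n :=
    (eventually_ge_atTop 2).filter_mono inf_le_left
  filter_upwards [heven, hlarge, hρ, hdρ.eventually_le_const (show (0 : ℝ) < 1 / 2 by norm_num)]
    with n hn hn2 hρn hratio
  refine one_sub_le_rootProb_groupBallsMeetOnlyAt hn (by omega) ?_ hρn
  have hsq : (d n : ℝ) ^ 2 ≤ n / 2 := by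
    have hn0 : (0 : ℝ) < n := by positivity
    rw [div_le_iff₀ hn0] at hratio
    nlinarith [Real.one_le_rpow (show (1 : ℝ) ≤ 4 by norm_num) hρn, sq_nonneg (d n : ℝ)]
  have hdn : 2 * (d n : ℝ) ≤ n := by
    nlinarith [sq_nonneg ((d n : ℝ) - 1), show (2 : ℝ) ≤ n from mod_cast hn2]
  exact_mod_cast hdn

lemma four_rpow_logb_add_div_three {x y : ℝ} (hx : 0 < x) (hy : 0 < y) :
    (4 : ℝ) ^ ((Real.logb 2 x + 20 * Real.logb 2 y) / 3) = x ^ (2 / 3 : ℝ) * y ^ (40 / 3 : ℝ) := by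
  have hexp : 2 * ((Real.logb 2 x + 20 * Real.logb 2 y) / 3) =
      Real.logb 2 x * (2 / 3) + Real.logb 2 y * (40 / 3) := by ring
  rw [show (4 : ℝ) = 2 ^ (2 : ℝ) by norm_num, ← Real.rpow_mul zero_le_two, hexp,
    Real.rpow_add two_pos, Real.rpow_mul zero_le_two, Real.rpow_mul zero_le_two,
    Real.rpow_logb two_pos (by norm_num) hx, Real.rpow_logb two_pos (by norm_num) hy]

lemma eventually_one_le_log_natCast : ∀ᶠ n : ℕ in atTop, 1 ≤ Real.log n :=
  (Real.tendsto_log_atTop.comp tendsto_natCast_atTop_atTop).eventually_ge_atTop 1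

lemma tendsto_sq_mul_four_rpow_div {d : ℕ → ℕ}
    (hd : ∀ᶠ n : ℕ in atTop, (d n : ℝ) ≤ Real.log n ^ 2) :
    Tendsto (fun n : ℕ => (d n : ℝ) ^ 2 *
      4 ^ ((Real.logb 2 n + 20 * Real.logb 2 (Real.log n)) / 3) / n) atTop (𝓝 0) := by
  have hlim : Tendsto (fun n : ℕ => Real.log n ^ (52 / 3 : ℝ) / (n : ℝ) ^ (1 / 3 : ℝ)) atTop
      (𝓝 0) :=
    (isLittleO_log_rpow_rpow_atTop (52 / 3) (by norm_num)).tendsto_div_nhds_zero.comp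
      tendsto_natCast_atTop_atTop
  refine tendsto_of_tendsto_of_tendsto_of_le_of_le' tendsto_const_nhds hlim
    (.of_forall fun n => by positivity) ?_
  filter_upwards [hd, eventually_one_le_log_natCast, eventually_gt_atTop 0] with n hdn hlog hn0
  have hn : (0 : ℝ) < n := mod_cast hn0
  have hlog0 : 0 < Real.log n := by linarith
  have hpow : (Real.log n ^ 2) ^ 2 * Real.log n ^ (40 / 3 : ℝ) = Real.log n ^ (52 / 3 : ℝ) := by
    rw [← pow_mul, ← Real.rpow_natCast, ← Real.rpow_add hlog0]
    norm_num
  have hroot : (n : ℝ) ^ (2 / 3 : ℝ) * (n : ℝ) ^ (1 / 3 : ℝ) = n := by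
    rw [← Real.rpow_add hn]
    norm_num
  rw [four_rpow_logb_add_div_three hn hlog0, div_le_div_iff₀ hn (by positivity)]
  calc (d n : ℝ) ^ 2 * ((n : ℝ) ^ (2 / 3 : ℝ) * Real.log n ^ (40 / 3 : ℝ)) * (n : ℝ) ^ (1 / 3 : ℝ)
      ≤ (Real.log n ^ 2) ^ 2 * ((n : ℝ) ^ (2 / 3 : ℝ) * Real.log n ^ (40 / 3 : ℝ)) *
          (n : ℝ) ^ (1 / 3 : ℝ) := by gcongr
    _ = ((Real.log n ^ 2) ^ 2 * Real.log n ^ (40 / 3 : ℝ)) *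
          ((n : ℝ) ^ (2 / 3 : ℝ) * (n : ℝ) ^ (1 / 3 : ℝ)) := by ring
    _ = Real.log n ^ (52 / 3 : ℝ) * n := by rw [hpow, hroot]

lemma eventually_radius_nonneg : ∀ᶠ n : ℕ in atTop,
    0 ≤ (Real.logb 2 n + 20 * Real.logb 2 (Real.log n)) / 3 := by
  filter_upwards [eventually_one_le_log_natCast, eventually_ge_atTop 1] with n hlog hn
  have hlogb : 0 ≤ Real.logb 2 n := Real.logb_nonneg one_lt_two (mod_cast hn)
  have hloglog : 0 ≤ Real.logb 2 (Real.log n) := Real.logb_nonneg one_lt_two hlog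
  positivity

end Asymptotics

/-- For even `n → ∞` and `4 ≤ d(n) ≤ (log n)²`, `k = ⌊d/4⌋` and
`β = log₂ n + 20 log₂ log n`: sampling `G''(n, d(n))` together with an independent
uniformly random root `r`, with high probability every vertex `u ≠ r` is within distance
`β/3` of `r` in at most one of the group graphs `G_1,…,G_k`. -/
theorem stmt18 (d : ℕ → ℕ)
    (hd : ∀ᶠ n : ℕ in Filter.atTop, 4 ≤ d n ∧ (d n : ℝ) ≤ (Real.log n) ^ 2) :
    Filter.Tendsto
      (fun n : ℕ => rootProb n (d n)
        (fun M r => ∀ u : Fin n, u ≠ r →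
          ∀ i j : ℕ, i < d n / 4 → j < d n / 4 →
            ((groupGraph M i).Reachable u r ∧
              ((groupGraph M i).dist u r : ℝ) ≤
                (Real.logb 2 n + 20 * Real.logb 2 (Real.log n)) / 3) →
            ((groupGraph M j).Reachable u r ∧
              ((groupGraph M j).dist u r : ℝ) ≤
                (Real.logb 2 n + 20 * Real.logb 2 (Real.log n)) / 3) →
            i = j))
      (Filter.atTop ⊓ Filter.principal {n : ℕ | Even n}) (nhds 1) :=
  stmt18_general d _ (eventually_radius_nonneg.filter_mono inf_le_left)
    ((tendsto_sq_mul_four_rpow_div (hd.mono fun _ h => h.2)).mono_left inf_le_left)
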